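/- arXiv:1008.0763 — 3 statements merged into one kernel-verified Lean document; each statement's English description precedes it below -/
import Mathlib

section
/- For every finite abelian group G and every k ∈ ℕ₀, the k-th Olson constant equals the (k+1)-st Strong Davenport constant: Ol_k(G) = SD_{k+1}(G). -/
open Multiset

/-- A sequence (finite multiset) over `G` is zero-sumfree if every nonempty
subsequence has nonzero sum. -/
def IsZeroSumfree {G : Type*} [AddCommMonoid G] (S : Multiset G) : Prop :=
  ∀ T ≤ S, T ≠ 0 → T.sum ≠ 0

/-- A minimal zero-sum sequence: a nonempty sequence with sum zero all of whose
nonempty proper subsequences have nonzero sum. -/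
def IsMinimalZeroSum {G : Type*} [AddCommMonoid G] (S : Multiset G) : Prop :=
  S ≠ 0 ∧ S.sum = 0 ∧ ∀ T ≤ S, T ≠ 0 → T ≠ S → T.sum ≠ 0

/-- The cumulated multiplicity of level `ℓ` of a sequence:
`cm_ℓ(S) = Σ_{g ∈ G} max {0, v_g(S) − ℓ}`. -/
noncomputable def cmul {G : Type*} [AddCommMonoid G] (ℓ : ℕ) (S : Multiset G) : ℕ :=
  letI := Classical.decEq G
  ∑ g ∈ S.toFinset, (S.count g - ℓ)

/-- `SD_{(k,ℓ)}(G)`: the maximum length of a minimal zero-sum sequence `S` over `G`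
with `cm_ℓ(S) ≤ k`. -/
noncomputable def SDpair (G : Type*) [AddCommMonoid G] (k ℓ : ℕ) : ℕ :=
  sSup {m | ∃ S : Multiset G, IsMinimalZeroSum S ∧ cmul ℓ S ≤ k ∧ Multiset.card S = m}

/-- `SD_k(G)`: the `k`-th Strong Davenport constant. -/
noncomputable def SDk (G : Type*) [AddCommMonoid G] (k : ℕ) : ℕ := SDpair G k 1

/-- The Strong Davenport constant `SD(G) = SD_0(G)`. -/
noncomputable def SD (G : Type*) [AddCommMonoid G] : ℕ := SDk G 0

/-- The Olson constant `Ol(G) = SD_1(G)`. -/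
noncomputable def Ol (G : Type*) [AddCommMonoid G] : ℕ := SDk G 1

/-- `ol_k(G)`: the maximum length of a zero-sumfree sequence `S` over `G` with
`cm(S) ≤ k`. -/
noncomputable def olk (G : Type*) [AddCommMonoid G] (k : ℕ) : ℕ :=
  sSup {m | ∃ S : Multiset G, IsZeroSumfree S ∧ cmul 1 S ≤ k ∧ Multiset.card S = m}

/-- `Ol_k(G)`: the smallest integer `ℓ` such that every sequence `S` over `G` with
`cm(S) ≤ k` and `|S| ≥ ℓ` has a nonempty zero-sum subsequence. -/
noncomputable def Olk (G : Type*) [AddCommMonoid G] (k : ℕ) : ℕ :=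
  sInf {m | ∀ S : Multiset G, cmul 1 S ≤ k → m ≤ Multiset.card S →
    ∃ T, T ≤ S ∧ T ≠ 0 ∧ T.sum = 0}

/-- The Davenport constant `D(G)`: the maximum length of a minimal zero-sum
sequence over `G`. -/
noncomputable def DavenportD (G : Type*) [AddCommMonoid G] : ℕ :=
  sSup {m | ∃ S : Multiset G, IsMinimalZeroSum S ∧ Multiset.card S = m}

/-!
Deleting a term from a minimal zero-sum sequence leaves a zero-sumfree sequence, and adjoining
`-σ(S)` to a zero-sumfree sequence `S` gives a minimal zero-sum sequence. Adjoining a term raises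
the cumulated multiplicity by at most one, while a suitably chosen term to delete lowers it by one
unless it is already zero. Hence the integers `m` such that every sequence with `cm ≤ k` and length
at least `m` has a nonempty zero-sum subsequence are exactly the upper bounds of the lengths of the
minimal zero-sum sequences with `cm ≤ k + 1`, and the least upper bound of these lengths is their
maximum. The argument works for the cumulated multiplicity of any level.
-/

section CumulatedMultiplicity

variable {G : Type*} [AddCommMonoid G]

theorem cmul_eq_sum_of_toFinset_subset [DecidableEq G] (ℓ : ℕ) {S : Multiset G} {F : Finset G}
    (hSF : S.toFinset ⊆ F) : cmul ℓ S = ∑ g ∈ F, (S.count g - ℓ) := by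
  have hcmul : cmul ℓ S = ∑ g ∈ S.toFinset, (S.count g - ℓ) := by
    unfold cmul
    congr!
  rw [hcmul]
  refine Finset.sum_subset hSF fun g _ hg => ?_
  rw [count_eq_zero_of_notMem (mt mem_toFinset.2 hg), Nat.zero_sub]

theorem cmul_cons [DecidableEq G] (ℓ : ℕ) (a : G) (S : Multiset G) :
    cmul ℓ (a ::ₘ S) = cmul ℓ S + if ℓ ≤ S.count a then 1 else 0 := by
  have ha : a ∈ (a ::ₘ S).toFinset := mem_toFinset.2 (mem_cons_self a S)
  have hS : S.toFinset ⊆ (a ::ₘ S).toFinset := toFinset_subset.2 (subset_cons S a)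
  have hcount_ne : ∀ g ∈ (a ::ₘ S).toFinset.erase a,
      (a ::ₘ S).count g - ℓ = S.count g - ℓ := fun g hg => by
    rw [count_cons_of_ne (Finset.ne_of_mem_erase hg)]
  rw [cmul_eq_sum_of_toFinset_subset ℓ Finset.Subset.rfl, cmul_eq_sum_of_toFinset_subset ℓ hS,
    ← Finset.add_sum_erase _ _ ha, ← Finset.add_sum_erase _ _ ha,
    Finset.sum_congr rfl hcount_ne, count_cons_self]
  split_ifs <;> omega

theorem cmul_cons_le (ℓ : ℕ) (a : G) (S : Multiset G) : cmul ℓ (a ::ₘ S) ≤ cmul ℓ S + 1 := by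
  classical
  rw [cmul_cons]
  split_ifs <;> omega

theorem cmul_le_cmul_cons (ℓ : ℕ) (a : G) (S : Multiset G) : cmul ℓ S ≤ cmul ℓ (a ::ₘ S) := by
  classical
  exact (cmul_cons ℓ a S).symm ▸ Nat.le_add_right _ _

theorem cmul_eq_zero [DecidableEq G] {ℓ : ℕ} {S : Multiset G} :
    cmul ℓ S = 0 ↔ ∀ g ∈ S, S.count g ≤ ℓ := by
  simp [cmul_eq_sum_of_toFinset_subset ℓ Finset.Subset.rfl, Nat.sub_eq_zero_iff_le]

theorem exists_eq_cons_cmul_le (ℓ : ℕ) {T : Multiset G} (hT : T ≠ 0) :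
    ∃ g S, T = g ::ₘ S ∧ cmul ℓ S ≤ cmul ℓ T - 1 := by
  classical
  by_cases hzero : cmul ℓ T = 0
  · obtain ⟨g, hg⟩ := exists_mem_of_ne_zero hT
    obtain ⟨S, rfl⟩ := exists_cons_of_mem hg
    exact ⟨g, S, rfl, by have := cmul_le_cmul_cons ℓ g S; omega⟩
  · obtain ⟨g, hg, hcount⟩ : ∃ g ∈ T, ℓ < T.count g := by
      simpa only [cmul_eq_zero, not_forall, not_le, exists_prop] using hzero
    obtain ⟨S, rfl⟩ := exists_cons_of_mem hg
    rw [count_cons_self, Nat.lt_succ_iff] at hcount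
    exact ⟨g, S, rfl, by rw [cmul_cons, if_pos hcount, Nat.add_sub_cancel]⟩

theorem card_le_cmul_add [Fintype G] (ℓ : ℕ) (S : Multiset G) :
    card S ≤ cmul ℓ S + Fintype.card G * ℓ := by
  classical
  calc card S = ∑ g : G, S.count g := (sum_count_eq_card fun g _ => Finset.mem_univ g).symm
    _ ≤ ∑ g : G, ((S.count g - ℓ) + ℓ) := Finset.sum_le_sum fun _ _ => le_tsub_add
    _ = cmul ℓ S + Fintype.card G * ℓ := by
      rw [Finset.sum_add_distrib, ← cmul_eq_sum_of_toFinset_subset ℓ (Finset.subset_univ _),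
        Finset.sum_const, Finset.card_univ, smul_eq_mul]

end CumulatedMultiplicity

theorem not_isZeroSumfree_iff {G : Type*} [AddCommMonoid G] {S : Multiset G} :
    ¬IsZeroSumfree S ↔ ∃ T, T ≤ S ∧ T ≠ 0 ∧ T.sum = 0 := by
  simp only [IsZeroSumfree, not_forall, not_not, exists_prop]

theorem isZeroSumfree_zero {G : Type*} [AddCommMonoid G] : IsZeroSumfree (0 : Multiset G) :=
  fun _ hT hT0 => absurd (Multiset.le_zero.1 hT) hT0

theorem IsMinimalZeroSum.isZeroSumfree_of_lt {G : Type*} [AddCommMonoid G] {S T : Multiset G}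
    (hT : IsMinimalZeroSum T) (hST : S < T) : IsZeroSumfree S :=
  fun U hUS hU0 => hT.2.2 U (hUS.trans hST.le) hU0 (hUS.trans_lt hST).ne

theorem IsZeroSumfree.isMinimalZeroSum_neg_sum_cons {G : Type*} [AddCommGroup G]
    {S : Multiset G} (hS : IsZeroSumfree S) : IsMinimalZeroSum (-S.sum ::ₘ S) := by
  refine ⟨cons_ne_zero, by rw [sum_cons, neg_add_cancel], fun T hT hT0 hTne hTsum => ?_⟩
  by_cases hmem : -S.sum ∈ T
  · -- The complement of `T` is then a nonempty zero-sum subsequence of `S`.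
    obtain ⟨V, rfl⟩ := exists_cons_of_mem hmem
    obtain ⟨U, rfl⟩ := Multiset.le_iff_exists_add.1 ((cons_le_cons_iff _).1 hT)
    have hU0 : U ≠ 0 := by
      rintro rfl
      exact hTne (by rw [add_zero])
    have hUsum : U.sum = 0 := by
      rwa [sum_cons, sum_add, neg_add_rev, neg_add_cancel_right, neg_eq_zero] at hTsum
    exact hS U (Multiset.le_add_left U V) hU0 hUsum
  · exact hS T ((le_cons_of_notMem hmem).1 hT) hT0 hTsum

/-- The lengths of the minimal zero-sum sequences `S` over `G` with `cm_ℓ(S) ≤ k`; the supremum of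
this set is `SD_{(k,ℓ)}(G)`. -/
def minimalZeroSumLengths (G : Type*) [AddCommMonoid G] (k ℓ : ℕ) : Set ℕ :=
  {m | ∃ S : Multiset G, IsMinimalZeroSum S ∧ cmul ℓ S ≤ k ∧ card S = m}

/-- The integers `m` such that every sequence `S` over `G` with `cm_ℓ(S) ≤ k` and `|S| ≥ m` has a
nonempty zero-sum subsequence; the least of them is `Ol_{(k,ℓ)}(G)`. -/
def zeroSumForcingLengths (G : Type*) [AddCommMonoid G] (k ℓ : ℕ) : Set ℕ :=
  {m | ∀ S : Multiset G, cmul ℓ S ≤ k → m ≤ card S → ∃ T, T ≤ S ∧ T ≠ 0 ∧ T.sum = 0}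

/-- `Ol_{(k,ℓ)}(G)`: the Olson constant with respect to the cumulated multiplicity of level `ℓ`,
so that `Ol_k(G)` is the case `ℓ = 1`. -/
noncomputable def Olpair (G : Type*) [AddCommMonoid G] (k ℓ : ℕ) : ℕ :=
  sInf (zeroSumForcingLengths G k ℓ)

theorem zeroSumForcingLengths_eq_upperBounds (G : Type*) [AddCommGroup G] (k ℓ : ℕ) :
    zeroSumForcingLengths G k ℓ = upperBounds (minimalZeroSumLengths G (k + 1) ℓ) := by
  ext m
  constructor
  · rintro hm _ ⟨T, hT, hcmul, rfl⟩
    obtain ⟨g, S, rfl, hcmulS⟩ := exists_eq_cons_cmul_le ℓ hT.1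
    have hS : IsZeroSumfree S := hT.isZeroSumfree_of_lt (lt_cons_self S g)
    have hlt : card S < m := by
      by_contra! hle
      exact not_isZeroSumfree_iff.2 (hm S (by omega) hle) hS
    rwa [card_cons]
  · intro hm S hcmul hle
    rw [← not_isZeroSumfree_iff]
    intro hS
    have hlt : card S + 1 ≤ m :=
      hm ⟨-S.sum ::ₘ S, hS.isMinimalZeroSum_neg_sum_cons,
        (cmul_cons_le ℓ _ S).trans (Nat.succ_le_succ hcmul), card_cons _ S⟩
    omega

theorem bddAbove_minimalZeroSumLengths (G : Type*) [AddCommMonoid G] [Finite G] (k ℓ : ℕ) :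
    BddAbove (minimalZeroSumLengths G k ℓ) := by
  have := Fintype.ofFinite G
  refine ⟨k + Fintype.card G * ℓ, ?_⟩
  rintro _ ⟨S, -, hcmul, rfl⟩
  exact (card_le_cmul_add ℓ S).trans (Nat.add_le_add_right hcmul _)

theorem minimalZeroSumLengths_succ_nonempty (G : Type*) [AddCommGroup G] (k ℓ : ℕ) :
    (minimalZeroSumLengths G (k + 1) ℓ).Nonempty := by
  have hcmul : cmul ℓ (0 : Multiset G) = 0 := by simp [cmul]
  refine ⟨_, _, isZeroSumfree_zero.isMinimalZeroSum_neg_sum_cons, ?_, rfl⟩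
  exact (cmul_cons_le ℓ _ 0).trans (by omega)

theorem olson_eq_strong_davenport_succ_general (G : Type*) [AddCommGroup G] [Finite G]
    (k ℓ : ℕ) : Olpair G k ℓ = SDpair G (k + 1) ℓ := by
  calc Olpair G k ℓ = sInf (upperBounds (minimalZeroSumLengths G (k + 1) ℓ)) := by
        rw [Olpair, zeroSumForcingLengths_eq_upperBounds]
    _ = sSup (minimalZeroSumLengths G (k + 1) ℓ) :=
        csInf_upperBounds_eq_csSup (bddAbove_minimalZeroSumLengths G (k + 1) ℓ)
          (minimalZeroSumLengths_succ_nonempty G k ℓ)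
    _ = SDpair G (k + 1) ℓ := rfl

/-- For every finite abelian group `G` and every `k ∈ ℕ₀`,
`Ol_k(G) = SD_{k+1}(G)`. -/
theorem olson_eq_strong_davenport_succ (G : Type*) [AddCommGroup G] [Fintype G] (k : ℕ) :
    Olk G k = SDk G (k + 1) :=
  olson_eq_strong_davenport_succ_general G k 1
end

section
/- Let n, ℓ ∈ ℕ and k ∈ ℕ₀. (1) If k + ℓ ≥ n, then SD_{(k,ℓ)}(C_n) = n. (2) If k ≤ n − 1 and d = ⌊(−1 + √(1 + 8(n−k)/ℓ))/2⌋ (real square root and real division, then integer floor), then SD_{(k,ℓ)}(C_n) ≥ k + ℓ·d + ⌊(n−k)/(d+1) − ℓ·d/2⌋; in particular, SD_{(k,1)}(C_n) ≥ k + ⌊(−1 + √(1 + 8(n−k)))/2⌋. -/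
open Multiset

/-!
If `g` has order `n`, then a sequence of positive integers with sum `n` becomes, after multiplying
each term by `g`, a minimal zero-sum sequence: the sum of a nonempty proper subsequence lies
strictly between `0` and `n`. The multiples `a • g` with `1 ≤ a ≤ n` are distinct, so
multiplicities do not change either. It remains to write `n` as a sum of many positive integers:
take `k` ones, `ℓ` copies of each of `1, …, d`, as many copies of `d + 1` as still fit, and add
what is left over to the largest term. The largest `d` with `ℓ (1 + ⋯ + d) ≤ n - k` is the floor
of the positive root of `t (t + 1) = 2 (n - k) / ℓ`. The upper bound is the pigeonhole principle
for partial sums.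
-/

section PartialSums

theorem exists_sublist_sum_eq_zero {G : Type*} [AddGroup G] [Finite G] {L : List G}
    (hL : Nat.card G ≤ L.length) :
    ∃ T, T.Sublist L ∧ T ≠ [] ∧ T.length ≤ Nat.card G ∧ T.sum = 0 := by
  have := Fintype.ofFinite G
  obtain ⟨x, y, hne, hsum⟩ := Fintype.exists_ne_map_eq_of_card_lt
    (fun i : Fin (Nat.card G + 1) ↦ (L.take i).sum) (by simp [Nat.card_eq_fintype_card])
  wlog hxy : x < y generalizing x y
  · exact this y x hne.symm hsum.symm (lt_of_le_of_ne (not_lt.mp hxy) hne.symm)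
  have hlen : ((L.take y).drop x).length = y - x := by
    rw [List.length_drop, List.length_take]; omega
  refine ⟨(L.take y).drop x, (List.drop_sublist _ _).trans (List.take_sublist _ _), ?_, ?_, ?_⟩
  · rw [← List.length_pos_iff, hlen]; omega
  · rw [hlen]; omega
  · have hsplit := (L.take y).sum_take_add_sum_drop x
    rw [List.take_take, min_eq_left (Fin.le_def.mp hxy.le), hsum] at hsplit
    exact add_eq_left.mp hsplit

variable {G : Type*} [AddCommGroup G] [Finite G] {S : Multiset G}

theorem IsMinimalZeroSum.card_le_natCard (hS : IsMinimalZeroSum S) : card S ≤ Nat.card G := by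
  by_contra! hlt
  obtain ⟨T, hTS, hT, hlen, hsum⟩ :=
    exists_sublist_sum_eq_zero (L := S.toList) (by simpa using hlt.le)
  have hle : (T : Multiset G) ≤ S := by
    simpa only [coe_toList] using coe_le.mpr hTS.subperm
  have hne : (T : Multiset G) ≠ S := by
    rintro rfl
    exact hlt.not_ge hlen
  exact hS.2.2 T hle (by simpa using hT) hne (by simpa using hsum)

theorem SDpair_le_natCard (k ℓ : ℕ) : SDpair G k ℓ ≤ Nat.card G := by
  refine csSup_le' ?_
  rintro _ ⟨S, hS, -, rfl⟩
  exact hS.card_le_natCard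

theorem IsMinimalZeroSum.card_le_SDpair {k ℓ : ℕ} (hS : IsMinimalZeroSum S)
    (hk : cmul ℓ S ≤ k) : card S ≤ SDpair G k ℓ := by
  refine le_csSup ⟨Nat.card G, ?_⟩ ⟨S, hS, hk, rfl⟩
  rintro _ ⟨T, hT, -, rfl⟩
  exact hT.card_le_natCard

end PartialSums

section Multisets

theorem exists_le_map_eq_of_le_map {α β : Type*} {f : α → β} {S : Multiset α} {T : Multiset β}
    (h : T ≤ S.map f) : ∃ T' ≤ S, T'.map f = T := by
  induction S using Quotient.inductionOn
  induction T using Quotient.inductionOn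
  obtain ⟨L, hperm, hsub⟩ := h
  obtain ⟨L', hL', rfl⟩ := List.sublist_map_iff.mp hsub
  exact ⟨L', coe_le.mpr hL'.subperm, coe_eq_coe.mpr hperm⟩

theorem count_map_le_of_injOn {α β : Type*} [DecidableEq α] [DecidableEq β] {f : α → β}
    {S : Multiset α} {ℓ : ℕ} (hf : Set.InjOn f {a | a ∈ S}) (hS : ∀ a, S.count a ≤ ℓ) (b : β) :
    (S.map f).count b ≤ ℓ := by
  by_cases hb : b ∈ S.map f
  · obtain ⟨a, ha, rfl⟩ := mem_map.mp hb
    exact (count_map_eq_count f S hf a ha).trans_le (hS a)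
  · simp [count_eq_zero_of_notMem hb]

theorem sum_pos_of_zero_notMem {α : Type*} [AddCommMonoid α] [PartialOrder α]
    [CanonicallyOrderedAdd α] {S : Multiset α} (hS : S ≠ 0) (h0 : 0 ∉ S) : 0 < S.sum := by
  obtain ⟨a, ha⟩ := exists_mem_of_ne_zero hS
  have ha0 : a ≠ 0 := ne_of_mem_of_not_mem ha h0
  exact (pos_iff_ne_zero.mpr ha0).trans_le (le_sum_of_mem ha)

theorem exists_mem_forall_le {α : Type*} [LinearOrder α] {S : Multiset α} (hS : S ≠ 0) :
    ∃ M ∈ S, ∀ a ∈ S, a ≤ M := by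
  simpa using S.toFinset.exists_max_image id (toFinset_nonempty.mpr hS)

theorem exists_sum_eq_of_sum_le {ℓ m : ℕ} {B : Multiset ℕ} (hℓ : 1 ≤ ℓ)
    (hB : ∀ a, B.count a ≤ ℓ) (h0 : 0 ∉ B) (hm : B.sum ≤ m) :
    ∃ C : Multiset ℕ, (∀ a, C.count a ≤ ℓ) ∧ 0 ∉ C ∧ C.sum = m ∧ card B ≤ card C := by
  obtain rfl | hlt := hm.eq_or_lt
  · exact ⟨B, hB, h0, rfl, le_rfl⟩
  obtain rfl | hB0 := eq_or_ne B 0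
  · rw [sum_zero] at hlt
    exact ⟨{m}, fun a ↦ (count_le_card _ _).trans (by simpa using hℓ), by simpa using hlt.ne,
      sum_singleton m, by simp⟩
  obtain ⟨M, hM, hmax⟩ := exists_mem_forall_le hB0
  obtain ⟨B, rfl⟩ := exists_cons_of_mem hM
  have hBm : B.sum + M < m := by rwa [sum_cons, add_comm] at hlt
  -- Enlarging a largest term produces a value that did not occur before.
  have hnew : m - B.sum ∉ B := fun h ↦ by
    have := hmax _ (mem_cons_of_mem h)
    omega
  refine ⟨(m - B.sum) ::ₘ B, fun a ↦ ?_, ?_, ?_, by simp⟩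
  · obtain rfl | ha := eq_or_ne a (m - B.sum)
    · rwa [count_cons_self, count_eq_zero_of_notMem hnew]
    · rw [count_cons_of_ne ha]
      exact (count_le_count_cons a M B).trans (hB a)
  · rw [mem_cons, not_or]
    exact ⟨by omega, fun h ↦ h0 (mem_cons_of_mem h)⟩
  · rw [sum_cons]
    omega

theorem cmul_add_le_card {G : Type*} [AddCommMonoid G] [DecidableEq G] {ℓ : ℕ}
    (A : Multiset G) {B : Multiset G} (hB : ∀ g, B.count g ≤ ℓ) : cmul ℓ (A + B) ≤ card A := by
  have hcmul : cmul ℓ (A + B) = ∑ g ∈ (A + B).toFinset, ((A + B).count g - ℓ) := by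
    unfold cmul
    congr!
  calc cmul ℓ (A + B)
      ≤ ∑ g ∈ (A + B).toFinset, A.count g := by
        rw [hcmul]
        refine Finset.sum_le_sum fun g _ ↦ ?_
        rw [count_add]
        have := hB g
        omega
    _ = card A := sum_count_eq_card fun g hg ↦ by simp [hg]

end Multisets

section Multiples

theorem nsmul_injOn_Ioc_addOrderOf {G : Type*} [AddLeftCancelMonoid G] (g : G) :
    Set.InjOn (fun a : ℕ ↦ a • g) (Set.Ioc 0 (addOrderOf g)) := by
  rintro (_ | a) ha (_ | b) hb hab
  · rfl
  · exact absurd ha.1 (lt_irrefl 0)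
  · exact absurd hb.1 (lt_irrefl 0)
  · have hmod : a ≡ b [MOD addOrderOf g] :=
      Nat.ModEq.add_right_cancel' 1 (nsmul_eq_nsmul_iff_modEq.mp hab)
    exact congrArg (· + 1) (hmod.eq_of_lt_of_lt ha.2 hb.2)

theorem isMinimalZeroSum_map_nsmul {G : Type*} [AddCommMonoid G] {g : G} {S : Multiset ℕ}
    (hS : S ≠ 0) (h0 : 0 ∉ S) (hsum : S.sum = addOrderOf g) :
    IsMinimalZeroSum (S.map (· • g)) := by
  refine ⟨by simpa using hS, ?_, ?_⟩
  · rw [← Multiset.sum_smul, hsum, addOrderOf_nsmul_eq_zero]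
  · rintro T hT hT0 hTS hTsum
    obtain ⟨T', hT', rfl⟩ := exists_le_map_eq_of_le_map hT
    obtain ⟨U, rfl⟩ := Multiset.le_iff_exists_add.mp hT'
    have hU0 : U ≠ 0 := by rintro rfl; simp at hTS
    have hT'pos : 0 < T'.sum :=
      sum_pos_of_zero_notMem (by simpa using hT0) fun h ↦ h0 (mem_add.mpr (.inl h))
    have hUpos : 0 < U.sum := sum_pos_of_zero_notMem hU0 fun h ↦ h0 (mem_add.mpr (.inr h))
    have hdvd : addOrderOf g ∣ T'.sum := by
      rwa [addOrderOf_dvd_iff_nsmul_eq_zero, Multiset.sum_smul]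
    rw [sum_add] at hsum
    have := Nat.le_of_dvd hT'pos hdvd
    omega

variable {G : Type*} [AddCommGroup G] [Finite G] (g : G) {k ℓ : ℕ}

theorem card_add_le_SDpair {A B : Multiset ℕ} (hA : card A ≤ k) (hB : ∀ a, B.count a ≤ ℓ)
    (h0 : 0 ∉ A + B) (hsum : (A + B).sum = addOrderOf g) : card (A + B) ≤ SDpair G k ℓ := by
  classical
  have hne : A + B ≠ 0 := by
    rintro h
    exact (addOrderOf_pos g).ne (by rw [← hsum, h, sum_zero])
  have hinj : Set.InjOn (· • g) {a | a ∈ B} := by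
    refine (nsmul_injOn_Ioc_addOrderOf g).mono fun a ha ↦ ?_
    have haAB : a ∈ A + B := mem_add.mpr (.inr ha)
    exact ⟨Nat.pos_of_ne_zero (ne_of_mem_of_not_mem haAB h0), hsum ▸ le_sum_of_mem haAB⟩
  have hcm : cmul ℓ ((A + B).map (· • g)) ≤ k := by
    rw [Multiset.map_add]
    exact (cmul_add_le_card _ (count_map_le_of_injOn hinj hB)).trans (by simpa using hA)
  simpa only [card_map] using (isMinimalZeroSum_map_nsmul hne h0 hsum).card_le_SDpair hcm

theorem addOrderOf_le_SDpair (h : addOrderOf g ≤ k + ℓ) : addOrderOf g ≤ SDpair G k ℓ := by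
  have hones : replicate (addOrderOf g - ℓ) 1 + replicate (min (addOrderOf g) ℓ) 1 =
      replicate (addOrderOf g) 1 := by
    rw [← replicate_add]
    congr 1
    omega
  have hle := card_add_le_SDpair g (k := k) (ℓ := ℓ) (A := replicate (addOrderOf g - ℓ) 1)
    (B := replicate (min (addOrderOf g) ℓ) 1) (by rw [card_replicate]; omega)
    (fun a ↦ (count_le_card _ _).trans (by simp)) (by simp [mem_replicate])
    (by simp [hones])
  rwa [hones, card_replicate] at hle

theorem add_card_le_SDpair {B : Multiset ℕ} (hℓ : 1 ≤ ℓ) (hB : ∀ a, B.count a ≤ ℓ)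
    (h0 : 0 ∉ B) (hsum : k + B.sum ≤ addOrderOf g) : k + card B ≤ SDpair G k ℓ := by
  obtain ⟨C, hC, hC0, hCsum, hcard⟩ :=
    exists_sum_eq_of_sum_le (m := addOrderOf g - k) hℓ hB h0 (by omega)
  have hle := card_add_le_SDpair g (A := replicate k 1) (card_replicate k 1).le hC
    (by simp [mem_replicate, hC0]) (by simp [hCsum]; omega)
  rw [card_add, card_replicate] at hle
  omega

end Multiples

section Staircase

/-- The sequence of positive integers consisting of `ℓ` copies of each of `1, …, d` and `q` copies
of `d + 1`. For `q ≤ ℓ` it has the smallest sum among those of length `ℓ * d + q` in which no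
integer occurs more than `ℓ` times. -/
def staircase (ℓ d q : ℕ) : Multiset ℕ :=
  ℓ • (Finset.Icc 1 d).val + replicate q (d + 1)

variable {ℓ d q : ℕ}

theorem card_staircase : card (staircase ℓ d q) = ℓ * d + q := by
  simp [staircase]

theorem zero_notMem_staircase : 0 ∉ staircase ℓ d q := by
  simp [staircase, mem_nsmul, mem_replicate]

theorem count_staircase_le (hq : q ≤ ℓ) (a : ℕ) : (staircase ℓ d q).count a ≤ ℓ := by
  rw [staircase, count_add, count_nsmul, count_replicate]
  split_ifs with ha
  · subst ha
    rw [count_eq_zero_of_notMem (by simp)]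
    omega
  · simpa using Nat.mul_le_mul_left ℓ (nodup_iff_count_le_one.mp (Finset.Icc 1 d).nodup a)

theorem two_mul_sum_staircase :
    2 * (staircase ℓ d q).sum = ℓ * (d * (d + 1)) + 2 * q * (d + 1) := by
  have hgauss : 2 * (Finset.Icc 1 d).val.sum = d * (d + 1) := by
    induction d with
    | zero => rfl
    | succ d ih =>
      rw [← Finset.insert_Icc_right_eq_Icc_add_one (by omega),
        Finset.insert_val_of_notMem (by simp), sum_cons, mul_add, ih]
      ring
  rw [staircase, sum_add, sum_nsmul, sum_replicate, smul_eq_mul, smul_eq_mul, ← hgauss]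
  ring

theorem add_mul_add_le_SDpair {G : Type*} [AddCommGroup G] [Finite G] (g : G) {k : ℕ} (hℓ : 1 ≤ ℓ)
    (hq : q ≤ ℓ) (h : 2 * k + (ℓ * (d * (d + 1)) + 2 * q * (d + 1)) ≤ 2 * addOrderOf g) :
    k + (ℓ * d + q) ≤ SDpair G k ℓ := by
  rw [← two_mul_sum_staircase] at h
  rw [← card_staircase]
  exact add_card_le_SDpair g hℓ (count_staircase_le hq) zero_notMem_staircase (by omega)

end Staircase

section TriangularRoot

/-- The nonnegative solution `t` of `t * (t + 1) = 2 * x`, for `0 ≤ x`: the real inverse of the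
triangular numbers. -/
noncomputable def triangularRoot (x : ℝ) : ℝ :=
  (-1 + Real.sqrt (1 + 8 * x)) / 2

variable {x : ℝ}

theorem triangularRoot_nonneg (hx : 0 ≤ x) : 0 ≤ triangularRoot x := by
  have : 1 ≤ Real.sqrt (1 + 8 * x) := Real.one_le_sqrt.mpr (by linarith)
  unfold triangularRoot
  linarith

theorem floor_triangularRoot_nonneg (hx : 0 ≤ x) : 0 ≤ (⌊triangularRoot x⌋ : ℝ) :=
  mod_cast Int.floor_nonneg.mpr (triangularRoot_nonneg hx)

theorem triangularRoot_mul_add_one (hx : 0 ≤ x) :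
    triangularRoot x * (triangularRoot x + 1) = 2 * x := by
  have := Real.sq_sqrt (show 0 ≤ 1 + 8 * x by linarith)
  unfold triangularRoot
  linarith

theorem floor_triangularRoot_mul_add_one_le (hx : 0 ≤ x) :
    (⌊triangularRoot x⌋ : ℝ) * (⌊triangularRoot x⌋ + 1) ≤ 2 * x := by
  have hle := Int.floor_le (triangularRoot x)
  have hfloor := floor_triangularRoot_nonneg hx
  rw [← triangularRoot_mul_add_one hx]
  exact mul_le_mul hle (by linarith) (by linarith) (triangularRoot_nonneg hx)

theorem lt_floor_triangularRoot_add_one_mul (hx : 0 ≤ x) :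
    2 * x < (⌊triangularRoot x⌋ + 1 : ℝ) * (⌊triangularRoot x⌋ + 2) := by
  have hnonneg := triangularRoot_nonneg hx
  have hlt := Int.lt_floor_add_one (triangularRoot x)
  rw [← triangularRoot_mul_add_one hx]
  exact mul_lt_mul'' hlt (by linarith) hnonneg (by linarith)

variable {m ℓ : ℝ}

theorem div_floor_triangularRoot_sub_nonneg (hm : 0 ≤ m) (hℓ : 0 < ℓ) :
    0 ≤ m / (⌊triangularRoot (m / ℓ)⌋ + 1) - ℓ * ⌊triangularRoot (m / ℓ)⌋ / 2 := by
  have hx : 0 ≤ m / ℓ := by positivity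
  have hd := floor_triangularRoot_nonneg hx
  have hle := floor_triangularRoot_mul_add_one_le hx
  rw [← mul_div_assoc, le_div_iff₀ hℓ] at hle
  rw [sub_nonneg, le_div_iff₀ (by positivity)]
  linarith

theorem div_floor_triangularRoot_sub_lt (hm : 0 ≤ m) (hℓ : 0 < ℓ) :
    m / (⌊triangularRoot (m / ℓ)⌋ + 1) - ℓ * ⌊triangularRoot (m / ℓ)⌋ / 2 < ℓ := by
  have hx : 0 ≤ m / ℓ := by positivity
  have hd := floor_triangularRoot_nonneg hx
  have hlt := lt_floor_triangularRoot_add_one_mul hx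
  rw [← mul_div_assoc, div_lt_iff₀ hℓ] at hlt
  rw [sub_lt_iff_lt_add, div_lt_iff₀ (by positivity)]
  linarith

end TriangularRoot

section LowerBound

variable {G : Type*} [AddCommGroup G] [Finite G] (g : G) {k : ℕ}

theorem add_floor_le_SDpair {ℓ : ℕ} (hℓ : 1 ≤ ℓ) (hk : k ≤ addOrderOf g) {d : ℤ}
    (hd : d = ⌊triangularRoot (((addOrderOf g : ℝ) - k) / ℓ)⌋) :
    (k : ℤ) + ℓ * d + ⌊((addOrderOf g : ℝ) - k) / (d + 1) - ℓ * d / 2⌋ ≤ SDpair G k ℓ := by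
  have hm : (0 : ℝ) ≤ addOrderOf g - k := sub_nonneg.mpr (mod_cast hk)
  have hℓ' : (0 : ℝ) < ℓ := mod_cast hℓ
  have hd0 : 0 ≤ d := hd ▸ Int.floor_nonneg.mpr (triangularRoot_nonneg (by positivity))
  have hnonneg := div_floor_triangularRoot_sub_nonneg hm hℓ'
  have hlt := div_floor_triangularRoot_sub_lt hm hℓ'
  rw [← hd] at hnonneg hlt
  lift d to ℕ using hd0
  obtain ⟨q, hq⟩ := Int.eq_ofNat_of_zero_le (Int.floor_nonneg.mpr hnonneg)
  have hqle := Int.floor_le (((addOrderOf g : ℝ) - k) / ((d : ℤ) + 1) - ℓ * (d : ℤ) / 2)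
  rw [hq] at hqle ⊢
  have hqℓ : q ≤ ℓ := by exact_mod_cast (hqle.trans_lt hlt).le
  have hfit : 2 * k + (ℓ * (d * (d + 1)) + 2 * q * (d + 1)) ≤ 2 * addOrderOf g := by
    push_cast at hqle
    rw [le_sub_iff_add_le, le_div_iff₀ (by positivity)] at hqle
    rify
    linarith
  have := add_mul_add_le_SDpair g hℓ hqℓ hfit
  push_cast [add_assoc]
  exact_mod_cast this

theorem add_floor_le_SDpair_one (hk : k ≤ addOrderOf g) :
    (k : ℤ) + ⌊triangularRoot ((addOrderOf g : ℝ) - k)⌋ ≤ SDpair G k 1 := by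
  have hm : (0 : ℝ) ≤ addOrderOf g - k := sub_nonneg.mpr (mod_cast hk)
  have hrest := Int.floor_nonneg.mpr (div_floor_triangularRoot_sub_nonneg hm one_pos)
  have hle := add_floor_le_SDpair g le_rfl hk rfl
  simp only [Nat.cast_one, div_one, one_mul] at hrest hle
  omega

end LowerBound

theorem SDpair_cyclic_bounds_general {G : Type*} [AddCommGroup G] [Finite G] {g : G} {n : ℕ}
    (hg : addOrderOf g = n) (k : ℕ) {ℓ : ℕ} (hℓ : 1 ≤ ℓ) :
    SDpair G k ℓ ≤ Nat.card G ∧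
    (n ≤ k + ℓ → n ≤ SDpair G k ℓ) ∧
    (k ≤ n → ∀ d : ℤ,
      d = ⌊(-1 + Real.sqrt (1 + 8 * ((n : ℝ) - k) / ℓ)) / 2⌋ →
      (k : ℤ) + (ℓ : ℤ) * d +
          ⌊((n : ℝ) - k) / ((d : ℝ) + 1) - (ℓ : ℝ) * (d : ℝ) / 2⌋ ≤
        (SDpair G k ℓ : ℤ)) ∧
    (k ≤ n →
      (k : ℤ) + ⌊(-1 + Real.sqrt (1 + 8 * ((n : ℝ) - k))) / 2⌋ ≤
        (SDpair G k 1 : ℤ)) := by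
  subst hg
  exact ⟨SDpair_le_natCard k ℓ, addOrderOf_le_SDpair g,
    fun hk d hd ↦ add_floor_le_SDpair g hℓ hk (by rw [hd, triangularRoot, mul_div_assoc]),
    add_floor_le_SDpair_one g⟩

/-- Lower bounds for `SD_{(k,ℓ)}(C_n)`:
(1) if `k + ℓ ≥ n`, then `SD_{(k,ℓ)}(C_n) = n`;
(2) if `k ≤ n − 1` and `d = ⌊(−1 + √(1 + 8(n−k)/ℓ))/2⌋`, then
`SD_{(k,ℓ)}(C_n) ≥ k + ℓ·d + ⌊(n−k)/(d+1) − ℓ·d/2⌋`; in particular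
`SD_{(k,1)}(C_n) ≥ k + ⌊(−1 + √(1 + 8(n−k)))/2⌋`. -/
theorem SDpair_cyclic_bounds (n ℓ k : ℕ) (hn : 1 ≤ n) (hℓ : 1 ≤ ℓ) :
    (n ≤ k + ℓ → SDpair (ZMod n) k ℓ = n) ∧
    (k ≤ n - 1 → ∀ d : ℤ,
      d = ⌊(-1 + Real.sqrt (1 + 8 * ((n : ℝ) - k) / ℓ)) / 2⌋ →
      (k : ℤ) + (ℓ : ℤ) * d +
          ⌊((n : ℝ) - k) / ((d : ℝ) + 1) - (ℓ : ℝ) * (d : ℝ) / 2⌋ ≤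
        (SDpair (ZMod n) k ℓ : ℤ)) ∧
    (k ≤ n - 1 →
      (k : ℤ) + ⌊(-1 + Real.sqrt (1 + 8 * ((n : ℝ) - k))) / 2⌋ ≤
        (SDpair (ZMod n) k 1 : ℤ)) := by
  have : NeZero n := ⟨by omega⟩
  obtain ⟨hcard, hle, hfloor, hfloor_one⟩ :=
    SDpair_cyclic_bounds_general (ZMod.addOrderOf_one n) k hℓ
  rw [Nat.card_zmod] at hcard
  exact ⟨fun h ↦ hcard.antisymm (hle h), fun hk ↦ hfloor (by omega), fun hk ↦ hfloor_one (by omega)⟩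
end

section
/- Let G be a finite abelian group, g ∈ G, and k ∈ [1, |G| − 1]. If it is not the case that all three of the following hold — exp(G) = 2, k ∈ {2, |G| − 2}, and g = 0 — then there exists a subset S ⊆ G with |S| = k whose elements sum to g. -/
open Multiset

/-!
For `3 ≤ k ≤ |G| / 2`, take a `(k - 1)`-element set `T` and put `x = g - ∑ T`. If `x ∉ T`, adjoin
it. Otherwise pick `y ∈ T` such that `x + y` has at most one half; by counting, `x + y = z + w` for
distinct `z, w ∉ T`, and replacing `y` by `z` and `w` turns `T` into a `k`-element set with sum `g`.
A set `T` offering such a `y` for every `x ∈ T` always exists: if doubling is injective any `T` with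
at least two elements will do, and otherwise it suffices that `T` contains `0` and some `c ∉ 2G`.
Passing to complements exchanges `k` with `|G| - k` and `g` with `∑ G - g`, and `∑ G = 0` if
`exp(G) = 2` and `|G| > 2`.
-/

section Halves

variable {G : Type*} [AddCommGroup G] [DecidableEq G]

theorem card_union_image_add_sub_add_two_le {T : Finset G} {x y : G} (hx : x ∈ T) (hy : y ∈ T)
    (hyx : y ≠ x) : (T ∪ T.image (x + y - ·)).card + 2 ≤ 2 * T.card := by
  have hinter : ({x, y} : Finset G) ⊆ T ∩ T.image (x + y - ·) := by
    simp only [Finset.insert_subset_iff, Finset.singleton_subset_iff, Finset.mem_inter,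
      Finset.mem_image]
    exact ⟨⟨hx, y, hy, add_sub_cancel_right x y⟩, hy, x, hx, add_sub_cancel_left x y⟩
  calc (T ∪ T.image (x + y - ·)).card + 2
      ≤ (T ∪ T.image (x + y - ·)).card + (T ∩ T.image (x + y - ·)).card := by
        gcongr
        rw [← Finset.card_pair hyx.symm]
        exact Finset.card_le_card hinter
    _ = T.card + (T.image (x + y - ·)).card := Finset.card_union_add_card_inter _ _
    _ ≤ 2 * T.card := by
        rw [two_mul]
        exact Nat.add_le_add_left Finset.card_image_le _

variable [Fintype G]

/-- The solutions `z` of `2z = a`. They are the obstruction to writing `a` as a sum of two distinct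
elements. -/
def halves (a : G) : Finset G :=
  {z | z + z = a}

theorem mem_halves {a z : G} : z ∈ halves a ↔ z + z = a := by
  simp [halves]

theorem ne_of_halves_add_eq_empty {x y : G} (h : halves (x + y) = ∅) : y ≠ x := by
  rintro rfl
  exact Finset.notMem_empty y (h ▸ mem_halves.2 rfl)

theorem exists_mem_pair_halves_add_eq_empty {c : G} (hc : halves c = ∅) (x : G) :
    ∃ y ∈ ({0, c} : Finset G), halves (x + y) = ∅ := by
  by_cases hx : halves x = ∅
  · exact ⟨0, by simp, by rwa [add_zero]⟩
  · obtain ⟨w, hw⟩ := Finset.nonempty_iff_ne_empty.2 hx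
    refine ⟨c, by simp, Finset.eq_empty_of_forall_notMem fun z hz => ?_⟩
    rw [mem_halves] at hw hz
    have hsub : z - w ∈ halves c := by
      rw [mem_halves, sub_add_sub_comm, hz, hw, add_sub_cancel_left]
    exact Finset.notMem_empty _ (hc ▸ hsub)

theorem card_halves_le_one_of_forall_nonempty (h : ∀ a : G, (halves a).Nonempty) (a : G) :
    (halves a).card ≤ 1 := by
  have hsurj : Function.Surjective fun z : G => z + z := fun b =>
    (h b).imp fun _ => mem_halves.1
  have hinj := Finite.injective_iff_surjective.2 hsurj
  exact Finset.card_le_one.2 fun z hz w hw =>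
    hinj ((mem_halves.1 hz).trans (mem_halves.1 hw).symm)

theorem exists_card_eq_forall_exists_card_halves_add_le_one {m : ℕ} (hm : 2 ≤ m)
    (hmG : m ≤ Fintype.card G) :
    ∃ T : Finset G, T.card = m ∧ ∀ x ∈ T, ∃ y ∈ T, y ≠ x ∧ (halves (x + y)).card ≤ 1 := by
  by_cases hdiv : ∀ a : G, (halves a).Nonempty
  · obtain ⟨T, -, hT⟩ := Finset.exists_subset_card_eq (s := (Finset.univ : Finset G)) hmG
    refine ⟨T, hT, fun x _ => ?_⟩
    obtain ⟨y, hy, hyx⟩ := T.exists_mem_ne (by omega) x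
    exact ⟨y, hy, hyx, card_halves_le_one_of_forall_nonempty hdiv _⟩
  · obtain ⟨c, hc⟩ := not_forall.1 hdiv
    rw [Finset.not_nonempty_iff_eq_empty] at hc
    obtain ⟨T, hcT, -, hT⟩ := Finset.exists_subsuperset_card_eq
      (Finset.subset_univ {0, c}) (Finset.card_le_two.trans hm) hmG
    refine ⟨T, hT, fun x _ => ?_⟩
    obtain ⟨y, hy, hxy⟩ := exists_mem_pair_halves_add_eq_empty hc x
    exact ⟨y, hcT hy, ne_of_halves_add_eq_empty hxy, by simp [hxy]⟩

theorem exists_notMem_ne_add_eq_add {T : Finset G} {x y : G} (hx : x ∈ T) (hy : y ∈ T)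
    (hyx : y ≠ x) (hcard : 2 * T.card + (halves (x + y)).card < Fintype.card G + 2) :
    ∃ z w, z ∉ T ∧ w ∉ T ∧ z ≠ w ∧ z + w = x + y := by
  obtain ⟨z, hz⟩ : ∃ z, z ∉ (T ∪ T.image (x + y - ·)) ∪ halves (x + y) := by
    have hunion := Finset.card_union_le (T ∪ T.image (x + y - ·)) (halves (x + y))
    have hreflect := card_union_image_add_sub_add_two_le hx hy hyx
    obtain ⟨z, -, hz⟩ := Finset.exists_mem_notMem_of_card_lt_card
      (s := (T ∪ T.image (x + y - ·)) ∪ halves (x + y)) (t := Finset.univ)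
      (by rw [Finset.card_univ]; omega)
    exact ⟨z, hz⟩
  simp only [Finset.mem_union, Finset.mem_image, mem_halves, not_or] at hz
  obtain ⟨⟨hzT, hzreflect⟩, hzhalf⟩ := hz
  exact ⟨z, x + y - z, hzT, fun hw => hzreflect ⟨_, hw, sub_sub_cancel _ _⟩,
    fun hzw => hzhalf (eq_sub_iff_add_eq.1 hzw), add_sub_cancel _ _⟩

end Halves

section SubsetSums

variable {G : Type*} [AddCommGroup G]

theorem exists_card_eq_two_sum_eq {g x : G} (hx : x + x ≠ g) :
    ∃ S : Finset G, S.card = 2 ∧ ∑ s ∈ S, s = g := by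
  classical
  have hne : x ≠ g - x := fun h => hx (eq_sub_iff_add_eq.1 h)
  exact ⟨{x, g - x}, Finset.card_pair hne, by rw [Finset.sum_pair hne, add_sub_cancel]⟩

variable [Fintype G]

theorem exists_card_sum_eq_of_three_le {k : ℕ} (hk : 3 ≤ k) (hkG : 2 * k ≤ Fintype.card G + 2)
    (g : G) : ∃ S : Finset G, S.card = k ∧ ∑ s ∈ S, s = g := by
  classical
  obtain ⟨T, hT, hpartner⟩ := exists_card_eq_forall_exists_card_halves_add_le_one (G := G)
    (m := k - 1) (by omega) (by omega)
  obtain ⟨x, hxT⟩ : ∃ x, x + ∑ t ∈ T, t = g := ⟨g - ∑ t ∈ T, t, sub_add_cancel _ _⟩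
  by_cases hx : x ∈ T
  · obtain ⟨y, hy, hyx, hhalf⟩ := hpartner x hx
    obtain ⟨z, w, hz, hw, hzw, hsum⟩ := exists_notMem_ne_add_eq_add hx hy hyx (by omega)
    have hwE : w ∉ T.erase y := fun h => hw (Finset.mem_of_mem_erase h)
    have hzE : z ∉ insert w (T.erase y) := by
      rw [Finset.mem_insert, not_or]
      exact ⟨hzw, fun h => hz (Finset.mem_of_mem_erase h)⟩
    refine ⟨insert z (insert w (T.erase y)), ?_, ?_⟩
    · rw [Finset.card_insert_of_notMem hzE, Finset.card_insert_of_notMem hwE,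
        Finset.card_erase_of_mem hy]
      omega
    · rw [Finset.sum_insert hzE, Finset.sum_insert hwE, ← add_assoc, hsum, add_assoc,
        Finset.add_sum_erase T (fun t => t) hy, hxT]
  · refine ⟨insert x T, ?_, ?_⟩
    · rw [Finset.card_insert_of_notMem hx]
      omega
    · rw [Finset.sum_insert hx, hxT]

theorem exists_card_sum_eq_of_two_mul_le_card {k : ℕ} (hk : 1 ≤ k) (hkG : 2 * k ≤ Fintype.card G)
    {g : G} (htwo : k = 2 → ∃ x : G, x + x ≠ g) :
    ∃ S : Finset G, S.card = k ∧ ∑ s ∈ S, s = g := by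
  obtain rfl | rfl | hk3 : k = 1 ∨ k = 2 ∨ 3 ≤ k := by omega
  · exact ⟨{g}, Finset.card_singleton g, Finset.sum_singleton _ g⟩
  · obtain ⟨x, hx⟩ := htwo rfl
    exact exists_card_eq_two_sum_eq hx
  · exact exists_card_sum_eq_of_three_le hk3 (by omega) g

theorem exists_card_sum_eq_of_compl {k : ℕ} (hk : k ≤ Fintype.card G) {g : G}
    (h : ∃ S : Finset G, S.card = Fintype.card G - k ∧ ∑ s ∈ S, s = ∑ x : G, x - g) :
    ∃ S : Finset G, S.card = k ∧ ∑ s ∈ S, s = g := by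
  classical
  obtain ⟨S, hS, hsum⟩ := h
  refine ⟨Sᶜ, by rw [Finset.card_compl, hS, Nat.sub_sub_self hk], ?_⟩
  rw [eq_sub_of_add_eq' (Finset.sum_add_sum_compl S fun s => s), hsum, sub_sub_cancel]

end SubsetSums

section SumUniv

variable {G : Type*} [AddCommGroup G] [Fintype G]

theorem sum_univ_add_sum_univ : ∑ x : G, x + ∑ x : G, x = 0 := by
  have hneg : ∑ x : G, -x = ∑ x : G, x := Equiv.sum_comp (Equiv.neg G) fun x => x
  rwa [Finset.sum_neg_distrib, neg_eq_iff_add_eq_zero] at hneg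

theorem sum_univ_mk (H : AddSubgroup G) [Fintype (G ⧸ H)] :
    ∑ x : G, (x : G ⧸ H) = Nat.card H • ∑ q : G ⧸ H, q := by
  classical
  let e : G ≃ (G ⧸ H) × H := AddSubgroup.addGroupEquivQuotientProdAddSubgroup
  calc ∑ x : G, (x : G ⧸ H) = ∑ p : (G ⧸ H) × H, p.1 := Equiv.sum_comp e Prod.fst
    _ = Nat.card H • ∑ q : G ⧸ H, q := by
      rw [Fintype.sum_prod_type]
      simp [Finset.smul_sum]

-- `2 • ∑ q = 0` in `G ⧸ H`, so the even multiple `|H| • ∑ q` of `sum_univ_mk` vanishes.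
theorem sum_univ_mem_of_even_card {H : AddSubgroup G} (hH : Even (Nat.card H)) :
    ∑ x : G, x ∈ H := by
  classical
  obtain ⟨n, hn⟩ := hH
  rw [← QuotientAddGroup.eq_zero_iff, QuotientAddGroup.mk_sum, sum_univ_mk, hn, ← two_mul,
    mul_nsmul, two_nsmul, sum_univ_add_sum_univ, nsmul_zero]

theorem sum_univ_eq_zero_or_eq_of_addOrderOf_eq_two {a : G} (ha : addOrderOf a = 2) :
    ∑ x : G, x = 0 ∨ ∑ x : G, x = a := by
  classical
  have hmem : ∑ x : G, x ∈ AddSubgroup.zmultiples a :=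
    sum_univ_mem_of_even_card (by rw [Nat.card_zmultiples, ha]; exact even_two)
  rw [mem_zmultiples_iff_mem_range_addOrderOf, ha] at hmem
  simpa [Finset.range_add_one, eq_comm, or_comm] using hmem

theorem sum_univ_eq_zero_of_ne_of_addOrderOf_eq_two {a b : G} (hab : a ≠ b)
    (ha : addOrderOf a = 2) (hb : addOrderOf b = 2) : ∑ x : G, x = 0 := by
  rcases sum_univ_eq_zero_or_eq_of_addOrderOf_eq_two ha with h0 | hsum_a
  · exact h0
  · rcases sum_univ_eq_zero_or_eq_of_addOrderOf_eq_two hb with h0 | hsum_b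
    · exact h0
    · exact absurd (hsum_a.symm.trans hsum_b) hab

theorem sum_univ_eq_zero_of_exponent_eq_two (hexp : AddMonoid.exponent G = 2)
    (hG : 2 < Fintype.card G) : ∑ x : G, x = 0 := by
  classical
  obtain ⟨a, ha, b, hb, hab⟩ : ∃ a ∈ Finset.univ.erase (0 : G), ∃ b ∈ Finset.univ.erase 0, a ≠ b :=
    Finset.one_lt_card.1 (by
      rw [Finset.card_erase_of_mem (Finset.mem_univ 0), Finset.card_univ]
      omega)
  exact sum_univ_eq_zero_of_ne_of_addOrderOf_eq_two hab
    ((addOrderOf_eq_two_iff hexp).2 (Finset.ne_of_mem_erase ha))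
    ((addOrderOf_eq_two_iff hexp).2 (Finset.ne_of_mem_erase hb))

end SumUniv

theorem exponent_eq_two_and_eq_zero_of_forall_add_self_eq {G : Type*} [AddMonoid G] [Nontrivial G]
    {g : G} (h : ∀ x : G, x + x = g) : AddMonoid.exponent G = 2 ∧ g = 0 := by
  have hg : g = 0 := by rw [← h 0, add_zero]
  refine ⟨(AddMonoid.exponent_eq_prime_iff Nat.prime_two).2 fun x hx => ?_, hg⟩
  exact addOrderOf_eq_prime (by rw [two_nsmul, h, hg]) hx

/-- Let `G` be a finite abelian group, `g ∈ G` and `k ∈ [1, |G| − 1]`. If it is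
not the case that `exp(G) = 2`, `k ∈ {2, |G| − 2}` and `g = 0` all hold, then
there is a subset `S ⊆ G` with `|S| = k` whose elements sum to `g`. -/
theorem exists_subset_card_sum_eq (G : Type*) [AddCommGroup G] [Fintype G]
    (g : G) (k : ℕ) (hk1 : 1 ≤ k) (hk2 : k ≤ Fintype.card G - 1)
    (h : ¬(AddMonoid.exponent G = 2 ∧ (k = 2 ∨ k = Fintype.card G - 2) ∧ g = 0)) :
    ∃ S : Finset G, S.card = k ∧ ∑ x ∈ S, x = g := by
  have : Nontrivial G := Fintype.one_lt_card_iff_nontrivial.1 (by omega)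
  rcases le_or_gt (2 * k) (Fintype.card G) with hle | hlt
  · refine exists_card_sum_eq_of_two_mul_le_card hk1 hle fun hk => ?_
    by_contra! hdouble
    obtain ⟨hexp, hg⟩ := exponent_eq_two_and_eq_zero_of_forall_add_self_eq hdouble
    exact h ⟨hexp, .inl hk, hg⟩
  · refine exists_card_sum_eq_of_compl (by omega)
      (exists_card_sum_eq_of_two_mul_le_card (by omega) (by omega) fun hk => ?_)
    by_contra! hdouble
    obtain ⟨hexp, hg⟩ := exponent_eq_two_and_eq_zero_of_forall_add_self_eq hdouble
    rw [sum_univ_eq_zero_of_exponent_eq_two hexp (by omega), zero_sub, neg_eq_zero] at hg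
    exact h ⟨hexp, .inr (by omega), hg⟩
end
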